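/- Suppose Φ is infinite, and define E₂ = ⋃ L(ρ̂₁, ρ̂₂) ∩ Q̂, the union over all pairs of distinct positive roots ρ₁, ρ₂ ∈ Φ⁺, where L(ρ̂₁,ρ̂₂) is the affine line through ρ̂₁ and ρ̂₂. Then E₂ ⊆ E(Φ) and E₂ is dense in E(Φ); equivalently, since E(Φ) is closed, E(Φ) is the topological closure of E₂. -/

import Mathlib

open Filter Topology

noncomputable section

variable {ι V : Type*} [Fintype ι] [NormedAddCommGroup V] [NormedSpace ℝ V]

/-- The set of simple `B`-reflections: the linear automorphisms of `V` given by the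
`B`-reflection formula `u ↦ u - 2 (B α u / B α α) • α` associated to a simple root `α ∈ Δ`. -/
def simpleReflections (B : LinearMap.BilinForm ℝ V) (Δ : Module.Basis ι ℝ V) :
    Set (V ≃ₗ[ℝ] V) :=
  { e | ∃ i : ι, ∀ u : V, e u = u - (2 * B (Δ i) u / B (Δ i) (Δ i)) • Δ i }

/-- The geometric Coxeter group `W`: the subgroup of linear automorphisms of `V`
generated by the simple `B`-reflections. -/
def cox (B : LinearMap.BilinForm ℝ V) (Δ : Module.Basis ι ℝ V) : Subgroup (V ≃ₗ[ℝ] V) :=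
  Subgroup.closure (simpleReflections B Δ)

/-- The root system `Φ = W ⬝ Δ`. -/
def Phi (B : LinearMap.BilinForm ℝ V) (Δ : Module.Basis ι ℝ V) : Set V :=
  { ρ | ∃ w ∈ cox B Δ, ∃ i : ι, w (Δ i) = ρ }

/-- The positive roots `Φ⁺ = Φ ∩ cone(Δ)`. -/
def posPhi (B : LinearMap.BilinForm ℝ V) (Δ : Module.Basis ι ℝ V) : Set V :=
  { ρ ∈ Phi B Δ | ∀ i : ι, 0 ≤ Δ.repr ρ i }

/-- `|v|₁`: the sum of the coordinates of `v` in the basis `Δ`. -/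
def l1 (Δ : Module.Basis ι ℝ V) (v : V) : ℝ := ∑ i : ι, Δ.repr v i

/-- The normalization map `v ↦ v̂ = v / |v|₁`. -/
def nrm (Δ : Module.Basis ι ℝ V) (v : V) : V := (l1 Δ v)⁻¹ • v

/-- The set `Φ̂` of normalized roots. -/
def nPhi (B : LinearMap.BilinForm ℝ V) (Δ : Module.Basis ι ℝ V) : Set V :=
  nrm Δ '' posPhi B Δ

/-- `E(Φ)`: the set of accumulation points of the set of normalized roots. -/
def Eset (B : LinearMap.BilinForm ℝ V) (Δ : Module.Basis ι ℝ V) : Set V :=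
  { x | AccPt x (𝓟 (nPhi B Δ)) }

/-- The isotropic cone `Q` of `B`. -/
def isoQ (B : LinearMap.BilinForm ℝ V) : Set V := { v | B v v = 0 }

/-- The affine line through two points `a` and `b`. -/
def lineThrough (a b : V) : Set V := { y : V | ∃ t : ℝ, y = a + t • (b - a) }

/-- `E₂`: the union over all pairs of distinct positive roots `ρ₁, ρ₂` of
`L(ρ̂₁, ρ̂₂) ∩ Q̂`. -/
def E2 (B : LinearMap.BilinForm ℝ V) (Δ : Module.Basis ι ℝ V) : Set V :=
  { x : V | ∃ ρ₁ ∈ posPhi B Δ, ∃ ρ₂ ∈ posPhi B Δ, ρ₁ ≠ ρ₂ ∧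
      x ∈ lineThrough (nrm Δ ρ₁) (nrm Δ ρ₂) ∧ B x x = 0 ∧ l1 Δ x = 1 }

/-- `E₂°`: the union over all `α ∈ Δ` and `ρ ∈ Φ⁺` with `ρ̂ ≠ α` of `L(α, ρ̂) ∩ Q̂`. -/
def E2circ (B : LinearMap.BilinForm ℝ V) (Δ : Module.Basis ι ℝ V) : Set V :=
  { x : V | ∃ i : ι, ∃ ρ ∈ posPhi B Δ, nrm Δ ρ ≠ Δ i ∧
      x ∈ lineThrough (Δ i) (nrm Δ ρ) ∧ B x x = 0 ∧ l1 Δ x = 1 }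

/-!
Two roots `ρ`, `σ` with `B ρ σ = -(r + r⁻¹) / 2` and `|r| ≤ 1` generate under their reflections the
roots `U_{2n} ρ + U_{2n-1} σ`, with Chebyshev polynomials evaluated at `-B ρ σ`; their directions
tend to that of `ρ + r σ`, which is an isotropic point of the line through `ρ̂` and `σ̂`.

Conversely, `B` takes only finitely many values in `(-1, 1)` on pairs of roots, since such a pair is
conjugate into a finite standard parabolic subsystem. Two roots `γ`, `ρ` with the same products with
all simple roots satisfy `B γ ρ = B γ γ = 1`, so by pigeonhole, among infinitely many roots near a
point of `E(Φ)`, infinitely many `ρ` satisfy `|B γ ρ| ≥ 1` for one fixed root `γ`. Some isotropic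
`ρ + r γ` with `|r| ≤ 1` then has almost the direction of `ρ`, because `|ρ|₁ → ∞` along distinct
positive roots: the root system is discrete.
-/

section UnitReflection

variable {R M κ : Type*} [CommRing R] [AddCommGroup M] [Module R M]
  {B : LinearMap.BilinForm R M} {ρ : M}

/-- The `B`-reflection `u ↦ u - 2 B(ρ, u) ρ` in a vector `ρ` with `B(ρ, ρ) = 1`. -/
def unitReflection (hρ : B ρ ρ = 1) : M ≃ₗ[R] M :=
  Module.reflection (x := ρ) (f := (2 : R) • B ρ) (by simp [hρ])

lemma unitReflection_apply (hρ : B ρ ρ = 1) (u : M) :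
    unitReflection hρ u = u - (2 * B ρ u) • ρ := by
  simp [unitReflection, Module.reflection_apply]

lemma unitReflection_apply_self (hρ : B ρ ρ = 1) : unitReflection hρ ρ = -ρ :=
  Module.reflection_apply_self _

lemma unitReflection_mul_self (hρ : B ρ ρ = 1) : unitReflection hρ * unitReflection hρ = 1 :=
  LinearEquiv.ext <| Module.involutive_reflection _

lemma bilin_unitReflection (symm : ∀ u v, B u v = B v u) (hρ : B ρ ρ = 1) (u v : M) :
    B (unitReflection hρ u) (unitReflection hρ v) = B u v := by
  simp only [unitReflection_apply, map_sub, map_smul, smul_eq_mul, LinearMap.sub_apply,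
    LinearMap.smul_apply, hρ, symm u ρ]
  ring

lemma mul_unitReflection_mul_inv_apply {w : M ≃ₗ[R] M} (hw : ∀ u v, B (w u) (w v) = B u v)
    (hρ : B ρ ρ = 1) (u : M) :
    (w * unitReflection hρ * w⁻¹) u = u - (2 * B (w ρ) u) • w ρ := by
  have hwu : w (w⁻¹ u) = u := w.apply_symm_apply u
  simp only [LinearEquiv.mul_apply]
  rw [unitReflection_apply, map_sub, map_smul, hwu, ← hw ρ, hwu]

lemma eq_or_eq_neg_of_unitReflection_eq {F E : Type*} [Field F] [NeZero (2 : F)] [AddCommGroup E]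
    [Module F E] {B : LinearMap.BilinForm F E} {ρ σ : E} (hρ : B ρ ρ = 1) (hσ : B σ σ = 1)
    (heq : unitReflection hρ = unitReflection hσ) : σ = ρ ∨ σ = -ρ := by
  have happly := LinearEquiv.congr_fun heq σ
  rw [unitReflection_apply, unitReflection_apply_self, sub_eq_iff_eq_add, eq_neg_add_iff_add_eq,
    ← two_smul F σ, mul_smul] at happly
  have hmul : σ = B ρ σ • ρ := smul_right_injective E (two_ne_zero (α := F)) happly
  have hsq : B ρ σ * B ρ σ = 1 := by
    have := hσ
    rw [hmul] at this
    simpa [hρ] using this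
  rcases mul_self_eq_one_iff.1 hsq with hone | hone <;> rw [hone] at hmul
  · exact Or.inl (hmul.trans (one_smul F ρ))
  · exact Or.inr (hmul.trans (neg_one_smul F ρ))

lemma bilin_add_smul_self (symm : ∀ u v, B u v = B v u) {σ : M} (hρ : B ρ ρ = 1)
    (hσ : B σ σ = 1) (r : R) :
    B (ρ + r • σ) (ρ + r • σ) = r ^ 2 + 2 * B ρ σ * r + 1 := by
  simp only [map_add, map_smul, LinearMap.add_apply, LinearMap.smul_apply, smul_eq_mul, hρ, hσ,
    symm σ ρ]
  ring

open CoxeterSystem (alternatingWord alternatingWord_succ')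

/-- The letter by which `alternatingWord i j (n + 1)` extends `alternatingWord i j n` on the
left. -/
def alternatingLetter (i j : κ) (n : ℕ) : κ := if Even n then j else i

lemma alternatingWord_succ_eq_cons (i j : κ) (n : ℕ) :
    alternatingWord i j (n + 1) = alternatingLetter i j n :: alternatingWord i j n :=
  alternatingWord_succ' i j n

lemma alternatingLetter_add_two (i j : κ) (n : ℕ) :
    alternatingLetter i j (n + 2) = alternatingLetter i j n := by
  simp [alternatingLetter, Nat.even_add]

lemma bilin_alternatingLetter (symm : ∀ u v, B u v = B v u) (v : κ → M) (i j : κ) (n : ℕ) :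
    B (v (alternatingLetter i j n)) (v (alternatingLetter i j (n + 1))) = B (v i) (v j) := by
  by_cases h : Even n <;> simp [alternatingLetter, h, Nat.even_add_one, symm (v j)]

open Polynomial Polynomial.Chebyshev in
theorem prod_alternatingWord_unitReflection_apply (symm : ∀ u v, B u v = B v u) {v : κ → M}
    (hv : ∀ l, B (v l) (v l) = 1) (i j : κ) (n : ℕ) :
    ((alternatingWord i j n).map fun l => unitReflection (hv l)).prod (v i) =
      (U R n).eval (-B (v i) (v j)) • v (alternatingLetter i j (n + 1)) +
        (U R (n - 1)).eval (-B (v i) (v j)) • v (alternatingLetter i j n) := by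
  induction n with
  | zero => simp [alternatingLetter, alternatingWord]
  | succ n ih =>
    rw [alternatingWord_succ_eq_cons, List.map_cons, List.prod_cons, LinearEquiv.mul_apply, ih,
      alternatingLetter_add_two, map_add, map_smul, map_smul, unitReflection_apply_self,
      unitReflection_apply, bilin_alternatingLetter symm]
    push_cast
    rw [U_add_one, add_sub_cancel_right]
    simp only [eval_sub, eval_mul, eval_ofNat, eval_X]
    module

end UnitReflection

section WordLength

variable {κ G : Type*}

/-- The length of `g` with respect to the generators `s`: the least length of a word in `s` with
product `g`. It has the junk value `0` when `g` is not in the submonoid generated by `s`. -/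
def wordLength [Monoid G] (s : κ → G) (g : G) : ℕ :=
  sInf {n | ∃ l : List κ, l.length = n ∧ (l.map s).prod = g}

lemma wordLength_prod_le [Monoid G] (s : κ → G) (l : List κ) :
    wordLength s (l.map s).prod ≤ l.length :=
  Nat.sInf_le ⟨l, rfl, rfl⟩

lemma exists_length_eq_wordLength [Monoid G] {s : κ → G} {g : G}
    (hg : g ∈ Submonoid.closure (Set.range s)) :
    ∃ l : List κ, l.length = wordLength s g ∧ (l.map s).prod = g := by
  rw [← FreeMonoid.mrange_lift] at hg
  obtain ⟨l, hl⟩ := hg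
  exact Nat.sInf_mem (s := {n | ∃ l : List κ, l.length = n ∧ (l.map s).prod = g})
    ⟨_, l.toList, rfl, by rw [← hl, FreeMonoid.lift_apply]⟩

lemma eq_one_of_wordLength_eq_zero [Monoid G] {s : κ → G} {g : G}
    (hg : g ∈ Submonoid.closure (Set.range s)) (h : wordLength s g = 0) : g = 1 := by
  obtain ⟨l, hl, rfl⟩ := exists_length_eq_wordLength hg
  rw [h, List.length_eq_zero_iff] at hl
  simp [hl]

lemma wordLength_mul_prod_le [Monoid G] {s : κ → G} {g : G}
    (hg : g ∈ Submonoid.closure (Set.range s)) (l : List κ) :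
    wordLength s (g * (l.map s).prod) ≤ wordLength s g + l.length := by
  obtain ⟨m, hm, rfl⟩ := exists_length_eq_wordLength hg
  rw [← List.prod_append, ← List.map_append, ← hm, ← List.length_append]
  exact wordLength_prod_le s _

lemma wordLength_mul_le [Monoid G] {s : κ → G} {g : G}
    (hg : g ∈ Submonoid.closure (Set.range s)) (i : κ) :
    wordLength s (g * s i) ≤ wordLength s g + 1 := by
  simpa using wordLength_mul_prod_le hg [i]

lemma closure_range_toSubmonoid_of_involutive [Group G] {s : κ → G}
    (hs : ∀ i, s i * s i = 1) :
    (Subgroup.closure (Set.range s)).toSubmonoid = Submonoid.closure (Set.range s) := by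
  have hinv : (Set.range s)⁻¹ = Set.range s := by
    rw [Set.inv_range]
    exact congrArg Set.range (funext fun i => inv_eq_of_mul_eq_one_left (hs i))
  rw [Subgroup.closure_toSubmonoid, hinv, Set.union_self]

lemma wordLength_le_wordLength_mul_add_one [Group G] {s : κ → G} (hs : ∀ i, s i * s i = 1) {g : G}
    (hg : g ∈ Submonoid.closure (Set.range s)) (i : κ) :
    wordLength s g ≤ wordLength s (g * s i) + 1 := by
  have hgi : g * s i ∈ Submonoid.closure (Set.range s) :=
    mul_mem hg (Submonoid.subset_closure ⟨i, rfl⟩)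
  simpa [mul_assoc, hs] using wordLength_mul_le hgi i

lemma exists_wordLength_mul_add_one_eq [Group G] {s : κ → G} (hs : ∀ i, s i * s i = 1) {g : G}
    (hg : g ∈ Submonoid.closure (Set.range s)) (h : wordLength s g ≠ 0) :
    ∃ i, wordLength s (g * s i) + 1 = wordLength s g := by
  obtain ⟨l, hl, hlg⟩ := exists_length_eq_wordLength hg
  rcases l.eq_nil_or_concat with rfl | ⟨m, i, rfl⟩
  · exact absurd hl.symm h
  have hgi : g * s i = (m.map s).prod := by simp [← hlg, mul_assoc, hs]
  refine ⟨i, le_antisymm ?_ (wordLength_le_wordLength_mul_add_one hs hg i)⟩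
  rw [hgi, ← hl, List.length_concat]
  exact Nat.succ_le_succ (wordLength_prod_le s m)

end WordLength

section Chebyshev

open Polynomial Polynomial.Chebyshev Finset

lemma chebyshevU_nonneg_and_le_succ {c : ℝ} (hc : 1 ≤ c) (n : ℕ) :
    0 ≤ (U ℝ (n - 1)).eval c ∧ (U ℝ (n - 1)).eval c ≤ (U ℝ n).eval c := by
  induction n with
  | zero => simp
  | succ n ih =>
    push_cast
    rw [add_sub_cancel_right, U_add_one]
    simp only [eval_sub, eval_mul, eval_ofNat, eval_X]
    constructor <;> nlinarith

lemma sin_pi_div_pos {k : ℕ} (hk : 2 ≤ k) : 0 < Real.sin (Real.pi / k) := by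
  have : (2 : ℝ) ≤ k := by exact_mod_cast hk
  exact Real.sin_pos_of_pos_of_lt_pi (by positivity) (div_lt_self Real.pi_pos (by linarith))

lemma chebyshevU_cos_pi_div_nonneg {k : ℕ} (hk : 2 ≤ k) {n : ℤ} (hn : -1 ≤ n) (hnk : n + 1 ≤ k) :
    0 ≤ (U ℝ n).eval (Real.cos (Real.pi / k)) := by
  refine nonneg_of_mul_nonneg_left ?_ (sin_pi_div_pos hk)
  rw [U_real_cos]
  have hn' : (-1 : ℝ) ≤ n := by exact_mod_cast hn
  have hnk' : (n : ℝ) + 1 ≤ k := by exact_mod_cast hnk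
  refine Real.sin_nonneg_of_nonneg_of_le_pi (mul_nonneg (by linarith) (by positivity)) ?_
  calc (n + 1) * (Real.pi / k) ≤ k * (Real.pi / k) := by gcongr
    _ = Real.pi := mul_div_cancel₀ _ (by positivity)

lemma chebyshevU_sub_one_cos_pi_div {k : ℕ} (hk : 2 ≤ k) :
    (U ℝ (k - 1)).eval (Real.cos (Real.pi / k)) = 0 := by
  have hk0 : (k : ℝ) ≠ 0 := by positivity
  refine (mul_eq_zero_iff_right (sin_pi_div_pos hk).ne').1 ?_
  rw [U_real_cos]
  push_cast
  rw [sub_add_cancel, mul_div_cancel₀ _ hk0, Real.sin_pi]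

lemma chebyshevU_sub_two_cos_pi_div {k : ℕ} (hk : 2 ≤ k) :
    (U ℝ (k - 2)).eval (Real.cos (Real.pi / k)) = 1 := by
  have hk0 : (k : ℝ) ≠ 0 := by positivity
  refine mul_right_cancel₀ (sin_pi_div_pos hk).ne' ?_
  rw [U_real_cos, one_mul, ← Real.sin_pi_sub]
  congr 1
  push_cast
  field_simp
  ring

lemma pow_mul_chebyshevU {r : ℝ} (hr : r ≠ 0) (n : ℕ) :
    r ^ n * (U ℝ n).eval ((r + r⁻¹) / 2) = ∑ k ∈ range (n + 1), r ^ (2 * k) ∧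
      (U ℝ (n - 1)).eval ((r + r⁻¹) / 2) = r * ((U ℝ n).eval ((r + r⁻¹) / 2) - r ^ n) := by
  induction n with
  | zero => simp
  | succ n ih =>
    push_cast
    rw [add_sub_cancel_right, U_add_one]
    simp only [eval_sub, eval_mul, eval_ofNat, eval_X, ih.2, sum_range_succ _ (n + 1), ← ih.1]
    constructor <;> field_simp <;> ring

lemma chebyshevU_ne_zero {r : ℝ} (hr : r ≠ 0) (n : ℕ) : (U ℝ n).eval ((r + r⁻¹) / 2) ≠ 0 := by
  refine right_ne_zero_of_mul (a := r ^ n) ?_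
  rw [(pow_mul_chebyshevU hr n).1]
  exact (sum_pos (fun k _ => (even_two_mul k).pow_pos hr) ⟨0, by simp⟩).ne'

lemma abs_pow_div_chebyshevU_le {r : ℝ} (hr : r ≠ 0) (hr1 : |r| ≤ 1) (n : ℕ) :
    |r ^ n / (U ℝ n).eval ((r + r⁻¹) / 2)| ≤ 1 / ((n : ℝ) + 1) := by
  have hsum : ((n : ℝ) + 1) * r ^ (2 * n) ≤ r ^ n * (U ℝ n).eval ((r + r⁻¹) / 2) := by
    rw [(pow_mul_chebyshevU hr n).1]
    calc ((n : ℝ) + 1) * r ^ (2 * n) = ∑ _k ∈ range (n + 1), r ^ (2 * n) := by simp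
      _ ≤ ∑ k ∈ range (n + 1), r ^ (2 * k) := by
        refine sum_le_sum fun k hk => ?_
        rw [pow_mul, pow_mul, ← sq_abs]
        exact pow_le_pow_of_le_one (by positivity) (pow_le_one₀ (abs_nonneg r) hr1)
          (mem_range_succ_iff.1 hk)
  have hpos : 0 < r ^ (2 * n) := (even_two_mul n).pow_pos hr
  have hratio : r ^ n / (U ℝ n).eval ((r + r⁻¹) / 2) =
      r ^ (2 * n) / (r ^ n * (U ℝ n).eval ((r + r⁻¹) / 2)) := by
    rw [two_mul, pow_add, mul_div_mul_left _ _ (pow_ne_zero n hr)]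
  have hU : 0 < r ^ n * (U ℝ n).eval ((r + r⁻¹) / 2) := lt_of_lt_of_le (by positivity) hsum
  rw [hratio, abs_of_pos (div_pos hpos hU), div_le_div_iff₀ hU (by positivity)]
  linarith

theorem tendsto_chebyshevU_sub_one_div {r : ℝ} (hr : r ≠ 0) (hr1 : |r| ≤ 1) :
    Tendsto (fun n : ℕ => (U ℝ (n - 1)).eval ((r + r⁻¹) / 2) / (U ℝ n).eval ((r + r⁻¹) / 2))
      atTop (𝓝 r) := by
  have hzero : Tendsto (fun n : ℕ => r ^ n / (U ℝ n).eval ((r + r⁻¹) / 2)) atTop (𝓝 0) :=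
    squeeze_zero_norm (abs_pow_div_chebyshevU_le hr hr1) tendsto_one_div_add_atTop_nhds_zero_nat
  have hlim := (hzero.const_sub 1).const_mul r
  rw [sub_zero, mul_one] at hlim
  refine hlim.congr fun n => ?_
  rw [(pow_mul_chebyshevU hr n).2, mul_div_assoc, sub_div, div_self (chebyshevU_ne_zero hr n)]

end Chebyshev

section QuadraticForms

lemma sq_add_sq_le_inv_one_sub_abs {a b c : ℝ} (hc : |c| < 1)
    (hab : a ^ 2 + 2 * c * a * b + b ^ 2 = 1) : a ^ 2 + b ^ 2 ≤ (1 - |c|)⁻¹ := by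
  have hmul : |c| * (2 * |a * b|) ≤ |c| * (a ^ 2 + b ^ 2) := by
    gcongr
    rw [abs_mul, ← sq_abs a, ← sq_abs b]
    linarith [two_mul_le_add_sq |a| |b|]
  have hcross : -(2 * c * a * b) ≤ |c| * (2 * |a * b|) := by
    calc -(2 * c * a * b) ≤ |2 * c * a * b| := neg_le_abs _
      _ = |c| * (2 * |a * b|) := by simp only [abs_mul, abs_two]; ring
  rw [← one_div, le_div_iff₀ (sub_pos.2 hc)]
  linarith

lemma exists_abs_le_one_quadratic_eq_zero {β : ℝ} (hβ : 1 ≤ |β|) :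
    ∃ r : ℝ, |r| ≤ 1 ∧ r ^ 2 + 2 * β * r + 1 = 0 := by
  obtain ⟨r, hr⟩ := exists_quadratic_eq_zero (b := 2 * β) (c := 1) one_ne_zero
    ⟨2 * √(β ^ 2 - 1), by
      rw [discrim, mul_mul_mul_comm, Real.mul_self_sqrt
        (sub_nonneg.2 ((one_le_sq_iff_one_le_abs β).2 hβ))]
      ring⟩
  have hr0 : r ≠ 0 := by
    rintro rfl
    norm_num at hr
  rcases le_total |r| 1 with hle | hle
  · exact ⟨r, hle, by linear_combination hr⟩
  · refine ⟨r⁻¹, by rw [abs_inv]; exact inv_le_one_of_one_le₀ hle, ?_⟩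
    field_simp
    linear_combination hr

end QuadraticForms

section Normalization

variable {B : LinearMap.BilinForm ℝ V} {Δ : Module.Basis ι ℝ V} {v x : V}

/-- The functional `v ↦ |v|₁` as a linear map. -/
def l1Linear (Δ : Module.Basis ι ℝ V) : V →ₗ[ℝ] ℝ := ∑ i, Δ.coord i

lemma l1Linear_apply (v : V) : l1Linear Δ v = l1 Δ v := by
  simp [l1Linear, l1]

lemma l1_smul (c : ℝ) (v : V) : l1 Δ (c • v) = c * l1 Δ v := by
  rw [← l1Linear_apply, map_smul, l1Linear_apply, smul_eq_mul]

lemma continuous_l1 (Δ : Module.Basis ι ℝ V) : Continuous (l1 Δ) := by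
  have : FiniteDimensional ℝ V := Module.Finite.of_basis Δ
  rw [← funext (l1Linear_apply (Δ := Δ))]
  exact (l1Linear Δ).continuous_of_finiteDimensional

lemma nrm_smul {c : ℝ} (hc : c ≠ 0) (v : V) : nrm Δ (c • v) = nrm Δ v := by
  rw [nrm, nrm, l1_smul, smul_smul, mul_inv_rev, inv_mul_cancel_right₀ hc]

lemma l1_nrm (hv : l1 Δ v ≠ 0) : l1 Δ (nrm Δ v) = 1 := by
  rw [nrm, l1_smul, inv_mul_cancel₀ hv]

lemma nrm_eq_self (hv : l1 Δ v = 1) : nrm Δ v = v := by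
  rw [nrm, hv, inv_one, one_smul]

lemma continuousAt_nrm (hv : l1 Δ v ≠ 0) : ContinuousAt (nrm Δ) v :=
  ((continuous_l1 Δ).continuousAt.inv₀ hv).smul continuousAt_id

lemma eventually_nrm_add_mem (hx : l1 Δ x = 1) {s : Set V} (hs : s ∈ 𝓝 x) :
    ∀ᶠ p in 𝓝 x ×ˢ 𝓝 0, l1 Δ (p.1 + p.2) ≠ 0 ∧ nrm Δ (p.1 + p.2) ∈ s := by
  have hne : l1 Δ x ≠ 0 := hx ▸ one_ne_zero
  have hadd : Tendsto (fun p : V × V => p.1 + p.2) (𝓝 x ×ˢ 𝓝 0) (𝓝 x) := by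
    simpa [nhds_prod_eq] using (continuous_add (M := V)).tendsto (x, 0)
  have hnrm : nrm Δ ⁻¹' s ∈ 𝓝 x := continuousAt_nrm hne (by rwa [nrm_eq_self hx])
  exact hadd.eventually (((continuous_l1 Δ).continuousAt.eventually_ne hne).and hnrm)

lemma bilin_nrm_self (B : LinearMap.BilinForm ℝ V) (Δ : Module.Basis ι ℝ V) (v : V) :
    B (nrm Δ v) (nrm Δ v) = (l1 Δ v)⁻¹ ^ 2 * B v v := by
  simp only [nrm, map_smul, LinearMap.smul_apply, smul_eq_mul]
  ring

lemma exists_nrm_add_smul_eq {p q : ℝ} {ρ σ : V} (hqp : |q| ≤ |p|)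
    (hB : B (p • ρ + q • σ) (p • ρ + q • σ) = 0) (hl : l1 Δ (p • ρ + q • σ) = 1) :
    ∃ r : ℝ, |r| ≤ 1 ∧ B (ρ + r • σ) (ρ + r • σ) = 0 ∧ l1 Δ (ρ + r • σ) ≠ 0 ∧
      nrm Δ (ρ + r • σ) = p • ρ + q • σ := by
  have hp : p ≠ 0 := by
    rintro rfl
    obtain rfl : q = 0 := by simpa using hqp
    simp [← l1Linear_apply] at hl
  have hsmul : p • ρ + q • σ = p • (ρ + (q / p) • σ) := by
    rw [smul_add, smul_smul, mul_div_cancel₀ q hp]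
  refine ⟨q / p, ?_, ?_, ?_, ?_⟩
  · rw [abs_div]
    exact div_le_one_of_le₀ hqp (abs_nonneg p)
  · rw [hsmul] at hB
    simpa only [map_smul, LinearMap.smul_apply, smul_eq_mul, mul_eq_zero, hp, false_or] using hB
  · rw [hsmul, l1_smul] at hl
    exact right_ne_zero_of_mul_eq_one hl
  · rw [← nrm_smul hp, ← hsmul, nrm_eq_self hl]

lemma exists_of_mem_E2 (hx : x ∈ E2 B Δ) :
    ∃ ρ ∈ posPhi B Δ, ∃ σ ∈ posPhi B Δ, ∃ r : ℝ, |r| ≤ 1 ∧ B (ρ + r • σ) (ρ + r • σ) = 0 ∧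
      l1 Δ (ρ + r • σ) ≠ 0 ∧ nrm Δ (ρ + r • σ) = x := by
  obtain ⟨ρ, hρ, σ, hσ, -, ⟨t, rfl⟩, hB, hl⟩ := hx
  have hcomb : nrm Δ ρ + t • (nrm Δ σ - nrm Δ ρ) =
      ((1 - t) * (l1 Δ ρ)⁻¹) • ρ + (t * (l1 Δ σ)⁻¹) • σ := by
    simp only [nrm]
    module
  rw [hcomb] at hB hl ⊢
  rcases le_total |t * (l1 Δ σ)⁻¹| |(1 - t) * (l1 Δ ρ)⁻¹| with hle | hle
  · exact ⟨ρ, hρ, σ, hσ, exists_nrm_add_smul_eq hle hB hl⟩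
  · rw [add_comm] at hB hl ⊢
    exact ⟨σ, hσ, ρ, hρ, exists_nrm_add_smul_eq hle hB hl⟩

end Normalization

section Coordinates

variable {κ : Type*} [Finite κ] {B : LinearMap.BilinForm ℝ V} {Δ : Module.Basis κ ℝ V}

lemma repr_apply_eq_zero_of_inv_nonneg {w : V ≃ₗ[ℝ] V} (hw : ∀ i k, 0 ≤ Δ.repr (w (Δ i)) k)
    (hinv : ∀ i k, 0 ≤ Δ.repr (w⁻¹ (Δ i)) k) (hdiag : ∀ k, 0 < Δ.repr (w⁻¹ (Δ k)) k) {i k : κ}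
    (hik : i ≠ k) : Δ.repr (w (Δ i)) k = 0 := by
  cases nonempty_fintype κ
  have hsum : ∑ j, Δ.repr (w (Δ i)) j * Δ.repr (w⁻¹ (Δ j)) k = 0 := by
    calc ∑ j, Δ.repr (w (Δ i)) j * Δ.repr (w⁻¹ (Δ j)) k
      _ = Δ.repr (w⁻¹ (∑ j, Δ.repr (w (Δ i)) j • Δ j)) k := by
        simp only [map_sum, map_smul, Finsupp.coe_finsetSum, Finset.sum_apply, Finsupp.smul_apply,
          smul_eq_mul]
      _ = Δ.repr (Δ i) k := by
        rw [Δ.sum_repr, ← LinearEquiv.mul_apply, inv_mul_cancel, LinearEquiv.coe_one, id]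
      _ = 0 := by rw [Δ.repr_self, Finsupp.single_eq_of_ne hik.symm]
  rw [Finset.sum_eq_zero_iff_of_nonneg fun j _ => mul_nonneg (hw i j) (hinv j k)] at hsum
  exact (mul_eq_zero.1 (hsum k (Finset.mem_univ k))).resolve_right (hdiag k).ne'

lemma continuous_bilin [FiniteDimensional ℝ V] (B : LinearMap.BilinForm ℝ V) :
    Continuous fun p : V × V => B p.1 p.2 :=
  B.toContinuousBilinearMap.continuous₂

lemma eventually_repr_preReflection_pos (Δ : Module.Basis κ ℝ V) {x : V} (hx : B x x = 1) :
    ∀ᶠ p : V × V in 𝓝 (x, x), ∀ i, 0 < Δ.repr (Module.preReflection p.1 ((2 : ℝ) • B p.1)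
      (Module.preReflection p.2 ((2 : ℝ) • B p.2) (Δ i))) i := by
  have : FiniteDimensional ℝ V := Module.Finite.of_basis Δ
  have hrefl {f : V × V → V} (hf : Continuous f) {g : V × V → V} (hg : Continuous g) :
      Continuous fun p => Module.preReflection (f p) ((2 : ℝ) • B (f p)) (g p) := by
    have hB : Continuous fun p => B (f p) (g p) := (continuous_bilin B).comp (hf.prodMk hg)
    simp only [Module.preReflection_apply, LinearMap.smul_apply]
    exact hg.sub ((continuous_const.mul hB).smul hf)
  refine eventually_all.2 fun i => ?_
  have hcont := (Δ.coord i).continuous_of_finiteDimensional.comp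
    (hrefl continuous_fst (hrefl continuous_snd (continuous_const (y := Δ i))))
  refine (hcont.tendsto (x, x)).eventually_const_lt ?_
  simp [Module.involutive_preReflection (f := (2 : ℝ) • B x) (x := x) (by simp [hx]) (Δ i)]

end Coordinates

section Subsystems

variable {κ : Type*} {B : LinearMap.BilinForm ℝ V} {Δ : Module.Basis κ ℝ V} {ρ : V}

lemma apply_mem_Phi {w : V ≃ₗ[ℝ] V} (hw : w ∈ cox B Δ) (hρ : ρ ∈ Phi B Δ) : w ρ ∈ Phi B Δ := by
  obtain ⟨g, hg, i, rfl⟩ := hρ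
  exact ⟨w * g, mul_mem hw hg, i, rfl⟩

lemma basis_mem_Phi (i : κ) : Δ i ∈ Phi B Δ := ⟨1, one_mem _, i, rfl⟩

lemma basis_mem_posPhi (i : κ) : Δ i ∈ posPhi B Δ :=
  ⟨basis_mem_Phi i, fun l => by
    rw [Module.Basis.repr_self]
    exact Finsupp.single_nonneg.2 zero_le_one l⟩

/-- The roots of the standard parabolic subsystem of `I`: those in the span of the simple roots
`Δ i`, `i ∈ I`. -/
def parabolicRoots (B : LinearMap.BilinForm ℝ V) (Δ : Module.Basis κ ℝ V)
    (I : Set κ) : Set V :=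
  {ρ ∈ Phi B Δ | ∀ i ∉ I, Δ.repr ρ i = 0}

/-- The elements of `W` acting trivially on `V ⧸ P`. It contains the reflections in the roots that
lie in `P`. -/
def coxTrivialMod (B : LinearMap.BilinForm ℝ V) (Δ : Module.Basis κ ℝ V)
    (P : Submodule ℝ V) : Subgroup (V ≃ₗ[ℝ] V) where
  carrier := {g | g ∈ cox B Δ ∧ ∀ v, g v - v ∈ P}
  one_mem' := ⟨one_mem _, fun v => by simp⟩
  mul_mem' := fun {_ k} ⟨hg, hgP⟩ ⟨hk, hkP⟩ =>
    ⟨mul_mem hg hk, fun v => by simpa using P.add_mem (hgP (k v)) (hkP v)⟩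
  inv_mem' := fun {g} ⟨hg, hgP⟩ => ⟨inv_mem hg, fun v => by
    have hcancel : g (g⁻¹ v) = v := g.apply_symm_apply v
    simpa [hcancel] using P.neg_mem (hgP (g⁻¹ v))⟩

lemma apply_mem_Phi_inter {P : Submodule ℝ V} {g : V ≃ₗ[ℝ] V} (hg : g ∈ coxTrivialMod B Δ P)
    (hρ : ρ ∈ Phi B Δ ∩ P) : g ρ ∈ Phi B Δ ∩ P :=
  ⟨apply_mem_Phi hg.1 hρ.1, by simpa using P.add_mem (hg.2 ρ) hρ.2⟩

end Subsystems

/-- The compatibility conditions between the form `B` and the basis `Δ` which make `Δ` the simple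
roots of a root system for `B`. -/
structure IsSimpleSystem {κ : Type*} (B : LinearMap.BilinForm ℝ V) (Δ : Module.Basis κ ℝ V) :
    Prop where
  symm : ∀ u v : V, B u v = B v u
  diag : ∀ i : κ, B (Δ i) (Δ i) = 1
  off_diag : ∀ i j : κ, i ≠ j → B (Δ i) (Δ j) ≤ -1 ∨
    ∃ k : ℕ, 2 ≤ k ∧ B (Δ i) (Δ j) = -Real.cos (Real.pi / (k : ℝ))

namespace IsSimpleSystem

section Dichotomy

open CoxeterSystem (alternatingWord length_alternatingWord)
open Polynomial Polynomial.Chebyshev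

variable {κ : Type*} {B : LinearMap.BilinForm ℝ V} {Δ : Module.Basis κ ℝ V}
  (h : IsSimpleSystem B Δ) {w : V ≃ₗ[ℝ] V} {i j : κ}

/-- The reflection in the simple root `Δ i`. -/
def simpleReflection (h : IsSimpleSystem B Δ) (i : κ) : V ≃ₗ[ℝ] V := unitReflection (h.diag i)

lemma simpleReflection_mul_self (i : κ) : h.simpleReflection i * h.simpleReflection i = 1 :=
  unitReflection_mul_self _

lemma simpleReflections_eq_range : simpleReflections B Δ = Set.range h.simpleReflection := by
  ext e
  simp only [simpleReflections, h.diag, div_one, Set.mem_ofPred_eq, Set.mem_range]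
  refine exists_congr fun i => ?_
  rw [LinearEquiv.ext_iff]
  simp only [simpleReflection, unitReflection_apply, eq_comm]

lemma mem_cox_iff : w ∈ cox B Δ ↔ w ∈ Submonoid.closure (Set.range h.simpleReflection) := by
  rw [← closure_range_toSubmonoid_of_involutive h.simpleReflection_mul_self,
    ← h.simpleReflections_eq_range]
  rfl

lemma prod_map_simpleReflection_mem_cox (l : List κ) :
    (l.map h.simpleReflection).prod ∈ cox B Δ :=
  list_prod_mem fun _ hx => by
    obtain ⟨i, -, rfl⟩ := List.mem_map.1 hx
    exact h.mem_cox_iff.2 (Submonoid.subset_closure ⟨i, rfl⟩)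

lemma simpleReflection_mem_cox (i : κ) : h.simpleReflection i ∈ cox B Δ := by
  simpa using h.prod_map_simpleReflection_mem_cox [i]

include h in
lemma bilin_apply_apply (hw : w ∈ cox B Δ) (u v : V) : B (w u) (w v) = B u v := by
  induction h.mem_cox_iff.1 hw using Submonoid.closure_induction generalizing u v with
  | mem x hx =>
    obtain ⟨i, rfl⟩ := hx
    exact bilin_unitReflection h.symm _ u v
  | one => rfl
  | mul x y hx hy ihx ihy =>
    rw [LinearEquiv.mul_apply, LinearEquiv.mul_apply, ihx (h.mem_cox_iff.2 hx),
      ihy (h.mem_cox_iff.2 hy)]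

/-- The element `w p⁻¹`, where `p` is the alternating product `… sᵢ sⱼ` with `n` factors. -/
def divAlternating (h : IsSimpleSystem B Δ) (w : V ≃ₗ[ℝ] V) (i j : κ) (n : ℕ) : V ≃ₗ[ℝ] V :=
  w * ((alternatingWord i j n).map h.simpleReflection).prod⁻¹

lemma divAlternating_mem_cox (hw : w ∈ cox B Δ) (i j : κ) (n : ℕ) :
    h.divAlternating w i j n ∈ cox B Δ :=
  mul_mem hw (inv_mem (h.prod_map_simpleReflection_mem_cox _))

lemma divAlternating_zero (w : V ≃ₗ[ℝ] V) (i j : κ) : h.divAlternating w i j 0 = w := by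
  simp [divAlternating, alternatingWord]

lemma divAlternating_succ (w : V ≃ₗ[ℝ] V) (i j : κ) (n : ℕ) :
    h.divAlternating w i j (n + 1) =
      h.divAlternating w i j n * h.simpleReflection (alternatingLetter i j n) := by
  rw [divAlternating, alternatingWord_succ_eq_cons, List.map_cons, List.prod_cons, mul_inv_rev,
    inv_eq_of_mul_eq_one_left (h.simpleReflection_mul_self _), ← mul_assoc]
  rfl

lemma divAlternating_succ_mul (w : V ≃ₗ[ℝ] V) (i j : κ) (n : ℕ) :
    h.divAlternating w i j (n + 1) * h.simpleReflection (alternatingLetter i j n) =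
      h.divAlternating w i j n := by
  rw [divAlternating_succ, mul_assoc, simpleReflection_mul_self, mul_one]

lemma apply_simple_eq_divAlternating (w : V ≃ₗ[ℝ] V) (i j : κ) (n : ℕ) :
    w (Δ i) =
      (U ℝ n).eval (-B (Δ i) (Δ j)) •
          h.divAlternating w i j n (Δ (alternatingLetter i j (n + 1))) +
        (U ℝ (n - 1)).eval (-B (Δ i) (Δ j)) •
          h.divAlternating w i j n (Δ (alternatingLetter i j n)) := by
  calc w (Δ i) = h.divAlternating w i j n
        (((alternatingWord i j n).map h.simpleReflection).prod (Δ i)) :=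
      congrArg (· (Δ i)) (inv_mul_cancel_right w _).symm
    _ = _ := by
      rw [← map_smul (h.divAlternating w i j n), ← map_smul (h.divAlternating w i j n), ← map_add]
      exact congrArg _ (prod_alternatingWord_unitReflection_apply h.symm h.diag i j n)

lemma exists_maximal_divAlternating
    (hw : w ∈ cox B Δ) (i : κ) (hj : wordLength h.simpleReflection (w * h.simpleReflection j) + 1 =
      wordLength h.simpleReflection w) :
    ∃ p, (∀ q ≤ p + 1, wordLength h.simpleReflection (h.divAlternating w i j q) + q =
        wordLength h.simpleReflection w) ∧
      wordLength h.simpleReflection (h.divAlternating w i j (p + 1)) ≤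
        wordLength h.simpleReflection (h.divAlternating w i j (p + 2)) := by
  classical
  let P (q : ℕ) : Prop := wordLength h.simpleReflection (h.divAlternating w i j q) + q ≠
    wordLength h.simpleReflection w
  have hP : ∃ q, P q := ⟨wordLength h.simpleReflection w + 1, by grind⟩
  have hlt (q : ℕ) (hq : q < Nat.find hP) := not_not.1 (Nat.find_min hP hq)
  have hge : 2 ≤ Nat.find hP := by
    rw [Nat.le_find_iff]
    intro q hq
    interval_cases q
    · simp [P, divAlternating_zero]
    · simpa [P, divAlternating_succ, divAlternating_zero, alternatingLetter] using hj
  obtain ⟨p, hp⟩ := Nat.exists_eq_add_of_le' hge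
  refine ⟨p, fun q hq => hlt q (by lia), ?_⟩
  have hfail : P (p + 2) := hp ▸ Nat.find_spec hP
  have hlast := hlt (p + 1) (by lia)
  have hstep := wordLength_le_wordLength_mul_add_one h.simpleReflection_mul_self
    (h.mem_cox_iff.1 (h.divAlternating_mem_cox hw i j (p + 1))) (alternatingLetter i j (p + 1))
  rw [← divAlternating_succ] at hstep
  simp only [P] at hfail
  lia

lemma lt_of_wordLength_divAlternating {k p : ℕ} (hw : w ∈ cox B Δ) (hk : 2 ≤ k)
    (hB : B (Δ i) (Δ j) = -Real.cos (Real.pi / k))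
    (hi : wordLength h.simpleReflection w ≤
      wordLength h.simpleReflection (w * h.simpleReflection i))
    (hp : ∀ q ≤ p, wordLength h.simpleReflection (h.divAlternating w i j q) + q =
      wordLength h.simpleReflection w) : p < k := by
  by_contra! hkp
  obtain ⟨m, rfl⟩ := Nat.exists_eq_add_of_le' (one_le_two.trans hk)
  have hroot : w (Δ i) = h.divAlternating w i j m (Δ (alternatingLetter i j m)) := by
    have hU₁ := chebyshevU_sub_one_cos_pi_div hk
    have hU₂ := chebyshevU_sub_two_cos_pi_div hk
    rw [h.apply_simple_eq_divAlternating w i j m, hB, neg_neg]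
    push_cast at hU₁ hU₂ ⊢
    rw [add_sub_cancel_right] at hU₁
    rw [show (m : ℤ) + 1 - 2 = m - 1 by ring] at hU₂
    rw [hU₁, hU₂, zero_smul, zero_add, one_smul]
  have hconj : w * h.simpleReflection i * w⁻¹ = h.divAlternating w i j m *
      h.simpleReflection (alternatingLetter i j m) * (h.divAlternating w i j m)⁻¹ := by
    ext u
    simp only [simpleReflection,
      mul_unitReflection_mul_inv_apply (h.bilin_apply_apply hw),
      mul_unitReflection_mul_inv_apply (h.bilin_apply_apply (h.divAlternating_mem_cox hw i j m)),
      hroot]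
  have hmul : w * h.simpleReflection i = h.divAlternating w i j (m + 1) *
      ((alternatingWord i j m).map h.simpleReflection).prod := by
    rw [← inv_mul_cancel_right (w * _) w, hconj, divAlternating_succ, mul_assoc]
    simp [divAlternating]
  have hle := wordLength_mul_prod_le
    (h.mem_cox_iff.1 (h.divAlternating_mem_cox hw i j (m + 1))) (alternatingWord i j m)
  rw [← hmul, length_alternatingWord] at hle
  have := hp (m + 1) hkp
  lia

theorem repr_apply_simple_nonneg (hw : w ∈ cox B Δ)
    (hi : wordLength h.simpleReflection w ≤
      wordLength h.simpleReflection (w * h.simpleReflection i)) (l : κ) :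
    0 ≤ Δ.repr (w (Δ i)) l := by
  induction hn : wordLength h.simpleReflection w using Nat.strong_induction_on
    generalizing w i with
  | _ n ih =>
  by_cases h0 : wordLength h.simpleReflection w = 0
  · rw [eq_one_of_wordLength_eq_zero (h.mem_cox_iff.1 hw) h0, LinearEquiv.coe_one, id,
      Module.Basis.repr_self]
    exact Finsupp.single_nonneg.2 zero_le_one l
  obtain ⟨j, hj⟩ :=
    exists_wordLength_mul_add_one_eq h.simpleReflection_mul_self (h.mem_cox_iff.1 hw) h0
  have hij : i ≠ j := by rintro rfl; lia
  obtain ⟨p, hp, hmax⟩ := h.exists_maximal_divAlternating hw i hj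
  have hg := h.divAlternating_mem_cox hw i j (p + 1)
  have hlen := hp (p + 1) le_rfl
  have hnext := ih _ (by lia) hg (by rwa [← divAlternating_succ]) rfl
  have hprev : 0 ≤ Δ.repr (h.divAlternating w i j (p + 1) (Δ (alternatingLetter i j (p + 2)))) l :=
    ih _ (by lia) hg (by
      have := hp p (by lia)
      rw [alternatingLetter_add_two, divAlternating_succ_mul]
      lia) rfl
  rw [h.apply_simple_eq_divAlternating w i j (p + 1), map_add, map_smul, map_smul,
    Finsupp.add_apply, Finsupp.smul_apply, Finsupp.smul_apply, smul_eq_mul, smul_eq_mul]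
  rcases h.off_diag i j hij with hB | ⟨k, hk, hB⟩
  · have hU := chebyshevU_nonneg_and_le_succ (le_neg_of_le_neg hB) (p + 1)
    exact add_nonneg (mul_nonneg (hU.1.trans hU.2) hprev) (mul_nonneg hU.1 hnext)
  · have hpk := h.lt_of_wordLength_divAlternating hw hk hB hi hp
    rw [hB, neg_neg]
    exact add_nonneg
      (mul_nonneg (chebyshevU_cos_pi_div_nonneg hk (by lia) (by lia)) hprev)
      (mul_nonneg (chebyshevU_cos_pi_div_nonneg hk (by lia) (by lia)) hnext)

end Dichotomy

section Roots

variable {κ : Type*} {B : LinearMap.BilinForm ℝ V} {Δ : Module.Basis κ ℝ V} {ρ : V}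
  (h : IsSimpleSystem B Δ)
include h

lemma bilin_root_self (hρ : ρ ∈ Phi B Δ) : B ρ ρ = 1 := by
  obtain ⟨w, hw, i, rfl⟩ := hρ
  rw [h.bilin_apply_apply hw, h.diag]

lemma neg_mem_Phi (hρ : ρ ∈ Phi B Δ) : -ρ ∈ Phi B Δ := by
  obtain ⟨w, hw, i, rfl⟩ := hρ
  refine ⟨w * h.simpleReflection i, mul_mem hw (h.simpleReflection_mem_cox i), i, ?_⟩
  rw [LinearEquiv.mul_apply, simpleReflection, unitReflection_apply_self, map_neg]

lemma unitReflection_mem_cox (hρ : ρ ∈ Phi B Δ) :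
    unitReflection (h.bilin_root_self hρ) ∈ cox B Δ := by
  obtain ⟨w, hw, i, rfl⟩ := hρ
  have hconj : unitReflection (h.bilin_root_self ⟨w, hw, i, rfl⟩) =
      w * h.simpleReflection i * w⁻¹ := by
    ext u
    rw [simpleReflection, mul_unitReflection_mul_inv_apply (h.bilin_apply_apply hw),
      unitReflection_apply]
  rw [hconj]
  exact mul_mem (mul_mem hw (h.simpleReflection_mem_cox i)) (inv_mem hw)

theorem mem_posPhi_or_neg_mem_posPhi (hρ : ρ ∈ Phi B Δ) : ρ ∈ posPhi B Δ ∨ -ρ ∈ posPhi B Δ := by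
  have hneg := h.neg_mem_Phi hρ
  obtain ⟨w, hw, i, rfl⟩ := hρ
  rcases le_total (wordLength h.simpleReflection w)
    (wordLength h.simpleReflection (w * h.simpleReflection i)) with hle | hle
  · exact Or.inl ⟨⟨w, hw, i, rfl⟩, h.repr_apply_simple_nonneg hw hle⟩
  · refine Or.inr ⟨hneg, ?_⟩
    have hpos := h.repr_apply_simple_nonneg (w := w * h.simpleReflection i) (i := i)
      (mul_mem hw (h.simpleReflection_mem_cox i))
      (by rwa [mul_assoc, simpleReflection_mul_self, mul_one])
    rwa [LinearEquiv.mul_apply, simpleReflection, unitReflection_apply_self, map_neg] at hpos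

lemma mem_posPhi_of_repr_pos (hρ : ρ ∈ Phi B Δ) {i : κ} (hi : 0 < Δ.repr ρ i) :
    ρ ∈ posPhi B Δ := by
  refine (h.mem_posPhi_or_neg_mem_posPhi hρ).resolve_right fun hneg => ?_
  have := hneg.2 i
  rw [map_neg, Finsupp.neg_apply] at this
  linarith

lemma exists_repr_pos (hρ : ρ ∈ posPhi B Δ) : ∃ i, 0 < Δ.repr ρ i := by
  by_contra! hle
  have hzero : ρ = 0 := Δ.ext_elem fun i => by simpa using le_antisymm (hle i) (hρ.2 i)
  simpa [hzero] using h.bilin_root_self hρ.1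

lemma simpleReflection_apply_mem_posPhi (hρ : ρ ∈ posPhi B Δ) {i : κ} (hi : ρ ≠ Δ i) :
    h.simpleReflection i ρ ∈ posPhi B Δ := by
  have hrepr {k : κ} (hk : i ≠ k) : Δ.repr (h.simpleReflection i ρ) k = Δ.repr ρ k := by
    simp [simpleReflection, unitReflection_apply, Finsupp.single_eq_of_ne hk.symm]
  obtain ⟨k, hk, hpos⟩ : ∃ k, i ≠ k ∧ 0 < Δ.repr ρ k := by
    by_contra! hle
    have hmul : ρ = Δ.repr ρ i • Δ i := Δ.ext_elem fun k => by
      by_cases hik : i = k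
      · simp [← hik]
      · simpa [Finsupp.single_eq_of_ne (Ne.symm hik)] using
          le_antisymm (hle k hik) (hρ.2 k)
    have hone := h.bilin_root_self hρ.1
    rw [hmul] at hone
    simp only [map_smul, LinearMap.smul_apply, smul_eq_mul, h.diag, mul_one] at hone
    rw [(pow_eq_one_iff_of_nonneg (hρ.2 i) two_ne_zero).1 (by rw [sq, hone]), one_smul] at hmul
    exact hi hmul
  exact h.mem_posPhi_of_repr_pos (apply_mem_Phi (h.simpleReflection_mem_cox i) hρ.1)
    ((hrepr hk).symm ▸ hpos)

end Roots

section Discreteness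

variable {κ : Type*} [Finite κ] {B : LinearMap.BilinForm ℝ V} {Δ : Module.Basis κ ℝ V}
  {w : V ≃ₗ[ℝ] V}

lemma eq_one_of_forall_repr_pos (h : IsSimpleSystem B Δ) (hw : w ∈ cox B Δ)
    (hpos : ∀ i, 0 < Δ.repr (w (Δ i)) i) (hpos' : ∀ i, 0 < Δ.repr (w⁻¹ (Δ i)) i) : w = 1 := by
  have hroot (i : κ) : w (Δ i) ∈ posPhi B Δ :=
    h.mem_posPhi_of_repr_pos (apply_mem_Phi hw (basis_mem_Phi i)) (hpos i)
  have hroot' (i : κ) : w⁻¹ (Δ i) ∈ posPhi B Δ :=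
    h.mem_posPhi_of_repr_pos (apply_mem_Phi (inv_mem hw) (basis_mem_Phi i)) (hpos' i)
  have hmul (i : κ) : w (Δ i) = Δ.repr (w (Δ i)) i • Δ i := Δ.ext_elem fun k => by
    by_cases hik : i = k
    · simp [← hik]
    · simp [repr_apply_eq_zero_of_inv_nonneg (fun i => (hroot i).2) (fun i => (hroot' i).2) hpos'
        hik, Finsupp.single_eq_of_ne (Ne.symm hik)]
  refine LinearEquiv.toLinearMap_injective <| Δ.ext fun i => ?_
  have hone := h.bilin_root_self (hroot i).1
  rw [hmul] at hone
  simp only [map_smul, LinearMap.smul_apply, smul_eq_mul, h.diag, mul_one] at hone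
  change w (Δ i) = Δ i
  rw [hmul, (pow_eq_one_iff_of_nonneg (hpos i).le two_ne_zero).1 (by rw [sq, hone]), one_smul]

lemma eq_or_eq_neg_of_repr_pos (h : IsSimpleSystem B Δ) {ρ σ : V} (hρ : ρ ∈ Phi B Δ)
    (hσ : σ ∈ Phi B Δ)
    (hρσ : ∀ i, 0 < Δ.repr (unitReflection (h.bilin_root_self hρ)
      (unitReflection (h.bilin_root_self hσ) (Δ i))) i)
    (hσρ : ∀ i, 0 < Δ.repr (unitReflection (h.bilin_root_self hσ)
      (unitReflection (h.bilin_root_self hρ) (Δ i))) i) : σ = ρ ∨ σ = -ρ := by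
  have hinv {τ : V} (hτ : τ ∈ Phi B Δ) := inv_eq_of_mul_eq_one_left
    (unitReflection_mul_self (h.bilin_root_self hτ))
  refine eq_or_eq_neg_of_unitReflection_eq (h.bilin_root_self hρ) (h.bilin_root_self hσ) ?_
  rw [← mul_inv_eq_one, hinv hσ]
  refine h.eq_one_of_forall_repr_pos
    (mul_mem (h.unitReflection_mem_cox hρ) (h.unitReflection_mem_cox hσ)) hρσ ?_
  rwa [mul_inv_rev, hinv hρ, hinv hσ]

theorem finite_Phi_inter_of_isCompact (h : IsSimpleSystem B Δ) {K : Set V} (hK : IsCompact K) :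
    (Phi B Δ ∩ K).Finite := by
  have : FiniteDimensional ℝ V := Module.Finite.of_basis Δ
  refine Set.not_infinite.1 fun hinf => ?_
  obtain ⟨x, -, hx⟩ := hinf.exists_accPt_of_subset_isCompact hK Set.inter_subset_right
  have hBx : B x x = 1 := by
    have hclosed : IsClosed {v : V | B v v = 1} :=
      isClosed_eq ((continuous_bilin B).comp (continuous_id.prodMk continuous_id))
        continuous_const
    exact closure_minimal (fun ρ hρ => h.bilin_root_self hρ.1) hclosed
      (mem_closure_iff_clusterPt.2 hx.clusterPt)
  have hev := eventually_repr_preReflection_pos Δ hBx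
  rw [nhds_prod_eq, eventually_prod_self_iff (r := fun p q => ∀ i, 0 < Δ.repr
    (Module.preReflection p ((2 : ℝ) • B p) (Module.preReflection q ((2 : ℝ) • B q) (Δ i))) i)]
    at hev
  obtain ⟨t, ht, hpos⟩ := hev
  have hinf' : (t ∩ (Phi B Δ ∩ K)).Infinite := Set.Infinite.of_accPt (hx.nhds_inter ht)
  obtain ⟨ρ, hρt, hρ, -⟩ := hinf'.nonempty
  refine hinf' ((Set.toFinite {ρ, -ρ}).subset ?_)
  rintro σ ⟨hσt, hσ, -⟩
  exact h.eq_or_eq_neg_of_repr_pos hρ hσ (hpos ρ hρt σ hσt) (hpos σ hσt ρ hρt)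

end Discreteness

section Height

variable {B : LinearMap.BilinForm ℝ V} {Δ : Module.Basis ι ℝ V} {ρ : V}

lemma l1_pos (h : IsSimpleSystem B Δ) (hρ : ρ ∈ posPhi B Δ) : 0 < l1 Δ ρ := by
  obtain ⟨i, hi⟩ := h.exists_repr_pos hρ
  exact Finset.sum_pos' (fun j _ => hρ.2 j) ⟨i, Finset.mem_univ i, hi⟩

theorem finite_setOf_l1_le (h : IsSimpleSystem B Δ) (M : ℝ) :
    {ρ ∈ posPhi B Δ | l1 Δ ρ ≤ M}.Finite := by
  have hbox : IsCompact (Δ.equivFunL ⁻¹' Set.univ.pi fun _ => Set.Icc 0 M) :=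
    Δ.equivFunL.toHomeomorph.isCompact_preimage.2 (isCompact_univ_pi fun _ => isCompact_Icc)
  refine (h.finite_Phi_inter_of_isCompact hbox).subset fun ρ hρ => ⟨hρ.1.1, fun i _ => ?_⟩
  have hle : Δ.repr ρ i ≤ l1 Δ ρ :=
    Finset.single_le_sum (f := fun j => Δ.repr ρ j) (fun j _ => hρ.1.2 j) (Finset.mem_univ i)
  exact ⟨hρ.1.2 i, hle.trans hρ.2⟩

end Height

section Descent

variable {κ : Type*} {B : LinearMap.BilinForm ℝ V} {Δ : Module.Basis κ ℝ V}
  (h : IsSimpleSystem B Δ)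
include h

lemma finite_inversions {w : V ≃ₗ[ℝ] V} (hw : w ∈ cox B Δ) :
    {ρ ∈ posPhi B Δ | w ρ ∉ posPhi B Δ}.Finite := by
  induction h.mem_cox_iff.1 hw using Submonoid.closure_induction_right with
  | one => simp
  | mul_right g hg s hs ih =>
    obtain ⟨i, rfl⟩ := hs
    refine (((ih (h.mem_cox_iff.2 hg)).preimage
      (h.simpleReflection i).injective.injOn).union (Set.finite_singleton (Δ i))).subset ?_
    rintro ρ ⟨hρ, hgρ⟩
    by_cases hi : ρ = Δ i
    · exact Or.inr hi
    · exact Or.inl ⟨h.simpleReflection_apply_mem_posPhi hρ hi, hgρ⟩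

lemma mapsTo_simpleReflection_of_neg {x : V →ₗ[ℝ] ℝ} {i : κ} (hi : x (Δ i) < 0) :
    Set.MapsTo (h.simpleReflection i) {ρ ∈ posPhi B Δ | x (h.simpleReflection i ρ) ≤ 0}
      ({ρ ∈ posPhi B Δ | x ρ ≤ 0} \ {Δ i}) := by
  have hself : h.simpleReflection i (Δ i) = -Δ i := unitReflection_apply_self _
  rintro ρ ⟨hρ, hle⟩
  have hne : ρ ≠ Δ i := by
    rintro rfl
    rw [hself, map_neg] at hle
    linarith
  refine ⟨⟨h.simpleReflection_apply_mem_posPhi hρ hne, hle⟩, fun heq => ?_⟩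
  have hneg : ρ = -Δ i := (h.simpleReflection i).injective <| by
    rw [Set.mem_singleton_iff.1 heq, map_neg, hself, neg_neg]
  have := hρ.2 i
  norm_num [hneg] at this

theorem exists_forall_apply_simple_nonneg {x : V →ₗ[ℝ] ℝ}
    (hx : {ρ ∈ posPhi B Δ | x ρ ≤ 0}.Finite) :
    ∃ w ∈ cox B Δ, (∀ i, 0 ≤ x (w (Δ i))) ∧ {ρ ∈ posPhi B Δ | x (w ρ) ≤ 0}.Finite := by
  induction hn : {ρ ∈ posPhi B Δ | x ρ ≤ 0}.ncard using Nat.strong_induction_on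
    generalizing x with
  | _ n ih =>
  by_cases! hnonneg : ∀ i, 0 ≤ x (Δ i)
  · exact ⟨1, one_mem _, hnonneg, hx⟩
  obtain ⟨i, hi⟩ := hnonneg
  have hmaps := h.mapsTo_simpleReflection_of_neg hi
  have hinj := (h.simpleReflection i).injective.injOn (s := {ρ ∈ posPhi B Δ |
    x (h.simpleReflection i ρ) ≤ 0})
  have hfin := hx.subset (Set.sdiff_subset (t := {Δ i}))
  have hlt := (Set.ncard_le_ncard_of_injOn _ hmaps hinj hfin).trans_lt
    (Set.ncard_sdiff_singleton_lt_of_mem (a := Δ i) ⟨basis_mem_posPhi i, hi.le⟩ hx)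
  obtain ⟨w, hw, hnonneg, hfin'⟩ := ih _ (hn ▸ hlt)
    (x := x ∘ₗ (h.simpleReflection i).toLinearMap) (.of_injOn hmaps hinj hfin) rfl
  exact ⟨h.simpleReflection i * w, mul_mem (h.simpleReflection_mem_cox i) hw, hnonneg, hfin'⟩

end Descent

section FiniteSubsystem

variable {κ : Type*} {B : LinearMap.BilinForm ℝ V} {Δ : Module.Basis κ ℝ V} {P : Submodule ℝ V}
  {ρ : V}

lemma unitReflection_mem_coxTrivialMod (h : IsSimpleSystem B Δ) (hρ : ρ ∈ Phi B Δ ∩ P) :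
    unitReflection (h.bilin_root_self hρ.1) ∈ coxTrivialMod B Δ P :=
  ⟨h.unitReflection_mem_cox hρ.1, fun v => by
    simpa [unitReflection_apply] using P.smul_mem _ hρ.2⟩

/-- An element fixing all roots in `P` moves every vector by an element of `P` that is orthogonal to
these roots. -/
lemma finite_coxTrivialMod (h : IsSimpleSystem B Δ) (hfin : (Phi B Δ ∩ P).Finite)
    (hnondeg : ∀ v ∈ P, (∀ ρ ∈ Phi B Δ ∩ P, B v ρ = 0) → v = 0) :
    Finite (coxTrivialMod B Δ P) := by
  have := hfin.to_subtype
  refine Finite.of_injective (fun g (ρ : ↥(Phi B Δ ∩ P)) =>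
    (⟨g.1 ρ, apply_mem_Phi_inter g.2 ρ.2⟩ : ↥(Phi B Δ ∩ P))) fun g k hgk => ?_
  have hfix : ∀ ρ ∈ Phi B Δ ∩ P, (k⁻¹ * g).1 ρ = ρ := fun ρ hρ => by
    have heq : g.1 ρ = k.1 ρ := congrArg Subtype.val (congrFun hgk ⟨ρ, hρ⟩)
    exact (congrArg (k.1⁻¹ : V ≃ₗ[ℝ] V) heq).trans (k.1.symm_apply_apply ρ)
  refine (inv_mul_eq_one.1 <| Subtype.ext <| LinearEquiv.ext fun v => ?_).symm
  refine sub_eq_zero.1 (hnondeg _ ((k⁻¹ * g).2.2 v) fun ρ hρ => ?_)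
  have horth := h.bilin_apply_apply (k⁻¹ * g).2.1 v ρ
  rw [hfix ρ hρ] at horth
  rw [map_sub, LinearMap.sub_apply, horth]
  exact sub_self _

variable [Finite κ] (h : IsSimpleSystem B Δ)
include h

lemma exists_forall_apply_eq_zero [Finite (coxTrivialMod B Δ P)] :
    ∃ x : V →ₗ[ℝ] ℝ, (∀ ρ ∈ Phi B Δ ∩ P, x ρ = 0) ∧ {ρ ∈ posPhi B Δ | x ρ ≤ 0}.Finite := by
  cases nonempty_fintype κ
  cases nonempty_fintype (coxTrivialMod B Δ P)
  let x : V →ₗ[ℝ] ℝ := ∑ g : coxTrivialMod B Δ P, l1Linear Δ ∘ₗ g.1.toLinearMap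
  have hx (v : V) : x v = ∑ g : coxTrivialMod B Δ P, l1 Δ (g.1 v) := by
    simp [x, l1Linear_apply]
  refine ⟨x, fun ρ hρ => ?_, ?_⟩
  · let s : coxTrivialMod B Δ P := ⟨_, h.unitReflection_mem_coxTrivialMod hρ⟩
    have hinv : x (s.1 ρ) = x ρ := by
      rw [hx, hx]
      exact Fintype.sum_equiv (Equiv.mulRight s) _ _ fun g => rfl
    rw [unitReflection_apply_self, map_neg] at hinv
    linarith
  · refine (Set.finite_iUnion fun g : coxTrivialMod B Δ P =>
      h.finite_inversions g.2.1).subset fun ρ ⟨hρ, hle⟩ => ?_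
    by_contra hpos
    simp only [Set.mem_iUnion, Set.mem_ofPred_eq, hρ, true_and, not_exists, not_not] at hpos
    rw [hx] at hle
    exact hle.not_gt (Finset.sum_pos (fun g _ => h.l1_pos (hpos g)) Finset.univ_nonempty)

lemma mem_parabolicRoots_iff {x : V →ₗ[ℝ] ℝ} (hx : ∀ i, 0 ≤ x (Δ i)) (hρ : ρ ∈ Phi B Δ) :
    ρ ∈ parabolicRoots B Δ {i | x (Δ i) = 0} ↔ x ρ = 0 := by
  cases nonempty_fintype κ
  have hexpand (v : V) : x v = ∑ i, Δ.repr v i * x (Δ i) := by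
    conv_lhs => rw [← Δ.sum_repr v]
    simp only [map_sum, map_smul, smul_eq_mul]
  have hsupp {v : V} (hv : ∀ i, 0 ≤ Δ.repr v i) (hxv : x v = 0) (i : κ) (hi : x (Δ i) ≠ 0) :
      Δ.repr v i = 0 := by
    rw [hexpand, Finset.sum_eq_zero_iff_of_nonneg fun i _ => mul_nonneg (hv i) (hx i)] at hxv
    exact (mul_eq_zero.1 (hxv i (Finset.mem_univ i))).resolve_right hi
  refine ⟨fun hmem => ?_, fun hxρ => ⟨hρ, ?_⟩⟩
  · rw [hexpand]
    exact Finset.sum_eq_zero fun i _ => mul_eq_zero.2 (or_iff_not_imp_right.2 (hmem.2 i))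
  · rcases h.mem_posPhi_or_neg_mem_posPhi hρ with hpos | hneg
    · exact hsupp hpos.2 hxρ
    · exact fun i hi => by simpa using hsupp hneg.2 (by rw [map_neg, hxρ, neg_zero]) i hi

theorem exists_apply_mem_parabolicRoots (hfin : (Phi B Δ ∩ P).Finite)
    (hnondeg : ∀ v ∈ P, (∀ ρ ∈ Phi B Δ ∩ P, B v ρ = 0) → v = 0) :
    ∃ w ∈ cox B Δ, ∃ I : Set κ, (parabolicRoots B Δ I).Finite ∧
      ∀ ρ ∈ Phi B Δ ∩ P, w ρ ∈ parabolicRoots B Δ I := by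
  have := h.finite_coxTrivialMod hfin hnondeg
  obtain ⟨x, hzero, hxfin⟩ := h.exists_forall_apply_eq_zero (P := P)
  obtain ⟨w, hw, hnonneg, hwfin⟩ := h.exists_forall_apply_simple_nonneg hxfin
  have hiff {ρ : V} (hρ : ρ ∈ Phi B Δ) :=
    h.mem_parabolicRoots_iff (x := x ∘ₗ w.toLinearMap) hnonneg hρ
  refine ⟨w⁻¹, inv_mem hw, {i | x (w (Δ i)) = 0}, ?_, fun ρ hρ => ?_⟩
  · refine (hwfin.union hwfin.neg).subset fun ρ hρ => ?_
    have hxρ : x (w ρ) = 0 := (hiff hρ.1).1 hρ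
    exact (h.mem_posPhi_or_neg_mem_posPhi hρ.1).imp (fun hpos => ⟨hpos, hxρ.le⟩)
      fun hneg => ⟨hneg, by rw [map_neg, map_neg, hxρ, neg_zero]⟩
  · exact (hiff (apply_mem_Phi (inv_mem hw) hρ.1)).2
      ((congrArg x (w.apply_symm_apply ρ)).trans (hzero ρ hρ))

end FiniteSubsystem

section FiniteValues

variable {κ : Type*} {B : LinearMap.BilinForm ℝ V} {Δ : Module.Basis κ ℝ V}
  (h : IsSimpleSystem B Δ) {ρ σ : V}
include h

lemma eq_zero_of_mem_span_pair (hρ : ρ ∈ Phi B Δ) (hσ : σ ∈ Phi B Δ) (hρσ : |B ρ σ| < 1) {v : V}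
    (hv : v ∈ Submodule.span ℝ {ρ, σ}) (hvρ : B v ρ = 0) (hvσ : B v σ = 0) : v = 0 := by
  obtain ⟨a, b, rfl⟩ := Submodule.mem_span_pair.1 hv
  simp only [map_add, map_smul, LinearMap.add_apply, LinearMap.smul_apply, smul_eq_mul,
    h.bilin_root_self hρ, h.bilin_root_self hσ, h.symm σ ρ] at hvρ hvσ
  have hdisc : 1 - B ρ σ ^ 2 ≠ 0 := (sub_pos.2 ((sq_lt_one_iff_abs_lt_one _).2 hρσ)).ne'
  have ha : a = 0 := (mul_eq_zero.1 (by linear_combination hvρ - B ρ σ * hvσ :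
    a * (1 - B ρ σ ^ 2) = 0)).resolve_right hdisc
  have hb : b = 0 := by simpa [ha] using hvσ
  simp [ha, hb]

variable [Finite κ]

lemma finite_Phi_inter_span_pair (hρ : ρ ∈ Phi B Δ) (hσ : σ ∈ Phi B Δ) (hρσ : |B ρ σ| < 1) :
    (Phi B Δ ∩ Submodule.span ℝ {ρ, σ}).Finite := by
  let M := √(1 - |B ρ σ|)⁻¹
  have hK : IsCompact ((fun p : ℝ × ℝ => p.1 • ρ + p.2 • σ) ''
      (Set.Icc (-M) M ×ˢ Set.Icc (-M) M)) :=
    (isCompact_Icc.prod isCompact_Icc).image (by fun_prop)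
  refine (h.finite_Phi_inter_of_isCompact hK).subset ?_
  rintro τ ⟨hτ, hspan⟩
  obtain ⟨a, b, rfl⟩ := Submodule.mem_span_pair.1 hspan
  have hle := sq_add_sq_le_inv_one_sub_abs (a := a) (b := b) hρσ <| by
    have := h.bilin_root_self hτ
    simp only [map_add, map_smul, LinearMap.add_apply, LinearMap.smul_apply, smul_eq_mul,
      h.bilin_root_self hρ, h.bilin_root_self hσ, h.symm σ ρ] at this
    linear_combination this
  exact ⟨hτ, (a, b), ⟨abs_le.1 (Real.abs_le_sqrt (by nlinarith [sq_nonneg b])),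
    abs_le.1 (Real.abs_le_sqrt (by nlinarith [sq_nonneg a]))⟩, rfl⟩

theorem finite_setOf_abs_bilin_lt_one :
    {t : ℝ | |t| < 1 ∧ ∃ ρ ∈ Phi B Δ, ∃ σ ∈ Phi B Δ, B ρ σ = t}.Finite := by
  refine (Set.Finite.biUnion (Set.toFinite {I : Set κ | (parabolicRoots B Δ I).Finite})
    fun I hI => hI.image2 (fun ρ σ => B ρ σ) hI).subset ?_
  rintro _ ⟨hlt, ρ, hρ, σ, hσ, rfl⟩
  have hρP : ρ ∈ Phi B Δ ∩ Submodule.span ℝ {ρ, σ} := ⟨hρ, Submodule.subset_span (by simp)⟩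
  have hσP : σ ∈ Phi B Δ ∩ Submodule.span ℝ {ρ, σ} := ⟨hσ, Submodule.subset_span (by simp)⟩
  obtain ⟨w, hw, I, hI, hmem⟩ := h.exists_apply_mem_parabolicRoots
    (h.finite_Phi_inter_span_pair hρ hσ hlt) fun v hv horth =>
      h.eq_zero_of_mem_span_pair hρ hσ hlt hv (horth ρ hρP) (horth σ hσP)
  exact Set.mem_biUnion hI ⟨w ρ, hmem ρ hρP, w σ, hmem σ hσP, h.bilin_apply_apply hw ρ σ⟩

end FiniteValues

section NormalizedRoots

variable {B : LinearMap.BilinForm ℝ V} {Δ : Module.Basis ι ℝ V} {ρ x : V}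
  (h : IsSimpleSystem B Δ)
include h

lemma nrm_add_smul_mem_E2 {ρ σ : V} (hρ : ρ ∈ posPhi B Δ) (hσ : σ ∈ posPhi B Δ) {r : ℝ}
    (hB : B (ρ + r • σ) (ρ + r • σ) = 0) (hl : l1 Δ (ρ + r • σ) ≠ 0) :
    nrm Δ (ρ + r • σ) ∈ E2 B Δ := by
  refine ⟨ρ, hρ, σ, hσ, ?_, ⟨r * l1 Δ σ / l1 Δ (ρ + r • σ), ?_⟩, ?_, l1_nrm hl⟩
  · rintro rfl
    rw [bilin_add_smul_self h.symm (h.bilin_root_self hρ.1) (h.bilin_root_self hρ.1),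
      h.bilin_root_self hρ.1] at hB
    have hr : r + 1 = 0 := pow_eq_zero_iff two_ne_zero |>.1 (by linear_combination hB)
    rw [eq_neg_of_add_eq_zero_left hr] at hl
    simp [← l1Linear_apply] at hl
  · have hρ' := (h.l1_pos hρ).ne'
    have hσ' := (h.l1_pos hσ).ne'
    have hadd : l1 Δ (ρ + r • σ) = l1 Δ ρ + r * l1 Δ σ := by
      simp only [← l1Linear_apply, map_add, map_smul, smul_eq_mul]
    rw [hadd] at hl
    simp only [nrm, hadd]
    match_scalars <;> field_simp
    ring
  · rw [bilin_nrm_self, hB, mul_zero]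

lemma nrm_mem_nPhi (hρ : ρ ∈ Phi B Δ) : nrm Δ ρ ∈ nPhi B Δ := by
  rcases h.mem_posPhi_or_neg_mem_posPhi hρ with hpos | hneg
  · exact ⟨ρ, hpos, rfl⟩
  · exact ⟨-ρ, hneg, by rw [← neg_one_smul ℝ, nrm_smul (neg_ne_zero.2 one_ne_zero)]⟩

lemma bilin_self_ne_zero_of_mem_nPhi (hx : x ∈ nPhi B Δ) : B x x ≠ 0 := by
  obtain ⟨ρ, hρ, rfl⟩ := hx
  rw [bilin_nrm_self, h.bilin_root_self hρ.1, mul_one]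
  exact pow_ne_zero 2 (inv_ne_zero (h.l1_pos hρ).ne')

lemma l1_eq_one_of_mem_Eset (hx : x ∈ Eset B Δ) : l1 Δ x = 1 := by
  refine closure_minimal ?_ (isClosed_singleton.preimage (continuous_l1 Δ))
    (mem_closure_iff_clusterPt.2 hx.clusterPt)
  rintro _ ⟨ρ, hρ, rfl⟩
  exact l1_nrm (h.l1_pos hρ).ne'

end NormalizedRoots

section IsotropicLimit

open CoxeterSystem (alternatingWord)
open Polynomial Polynomial.Chebyshev

variable {κ : Type*} {B : LinearMap.BilinForm ℝ V} {ρ σ : V}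

lemma chebyshevU_smul_add_smul_mem_Phi {Δ : Module.Basis κ ℝ V} (h : IsSimpleSystem B Δ)
    (hρ : ρ ∈ Phi B Δ) (hσ : σ ∈ Phi B Δ) (n : ℕ) :
    (U ℝ (2 * n : ℕ)).eval (-B ρ σ) • ρ + (U ℝ ((2 * n : ℕ) - 1)).eval (-B ρ σ) • σ ∈
      Phi B Δ := by
  have hword := prod_alternatingWord_unitReflection_apply h.symm
    (fun τ : Phi B Δ => h.bilin_root_self τ.2) ⟨ρ, hρ⟩ ⟨σ, hσ⟩ (2 * n)
  simp only [alternatingLetter, Nat.not_even_two_mul_add_one, even_two_mul, if_true,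
    if_false] at hword
  rw [← hword]
  refine apply_mem_Phi (list_prod_mem fun g hg => ?_) hρ
  obtain ⟨τ, -, rfl⟩ := List.mem_map.1 hg
  exact h.unitReflection_mem_cox τ.2

lemma nrm_add_smul_mem_Eset {Δ : Module.Basis ι ℝ V} (h : IsSimpleSystem B Δ)
    (hρ : ρ ∈ Phi B Δ) (hσ : σ ∈ Phi B Δ) {r : ℝ} (hr : |r| ≤ 1)
    (hB : B (ρ + r • σ) (ρ + r • σ) = 0) (hl : l1 Δ (ρ + r • σ) ≠ 0) :
    nrm Δ (ρ + r • σ) ∈ Eset B Δ := by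
  have hquad : r ^ 2 + 2 * B ρ σ * r + 1 = 0 := by
    rw [← bilin_add_smul_self h.symm (h.bilin_root_self hρ) (h.bilin_root_self hσ), hB]
  have hr0 : r ≠ 0 := by
    rintro rfl
    norm_num at hquad
  have hc : -B ρ σ = (r + r⁻¹) / 2 := by
    field_simp
    linear_combination -hquad
  have hlim : Tendsto (fun n : ℕ => nrm Δ ((U ℝ (2 * n : ℕ)).eval (-B ρ σ) • ρ +
      (U ℝ ((2 * n : ℕ) - 1)).eval (-B ρ σ) • σ)) atTop (𝓝 (nrm Δ (ρ + r • σ))) := by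
    have hratio := (tendsto_chebyshevU_sub_one_div hr0 hr).comp
      (tendsto_id.const_mul_atTop' two_pos)
    refine ((continuousAt_nrm hl).tendsto.comp
      ((hratio.smul_const σ).const_add ρ)).congr fun n => ?_
    have hU := chebyshevU_ne_zero hr0 (2 * n)
    rw [hc, ← nrm_smul (inv_ne_zero hU) (_ + _), smul_add, inv_smul_smul₀ hU, smul_smul,
      inv_mul_eq_div]
    rfl
  have hiso : B (nrm Δ (ρ + r • σ)) (nrm Δ (ρ + r • σ)) = 0 := by
    rw [bilin_nrm_self, hB, mul_zero]
  refine accPt_iff_frequently.2 (hlim.frequently (Frequently.of_forall fun n => ⟨?_, ?_⟩))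
  · exact fun heq => h.bilin_self_ne_zero_of_mem_nPhi
      (h.nrm_mem_nPhi (h.chebyshevU_smul_add_smul_mem_Phi hρ hσ n)) (heq ▸ hiso)
  · exact h.nrm_mem_nPhi (h.chebyshevU_smul_add_smul_mem_Phi hρ hσ n)

theorem E2_subset_Eset {Δ : Module.Basis ι ℝ V} (h : IsSimpleSystem B Δ) :
    E2 B Δ ⊆ Eset B Δ := fun x hx => by
  obtain ⟨ρ, hρ, σ, hσ, r, hr, hB, hl, rfl⟩ := exists_of_mem_E2 hx
  exact h.nrm_add_smul_mem_Eset hρ.1 hσ.1 hr hB hl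

end IsotropicLimit

section Density

lemma exists_infinite_one_le_abs_bilin {κ : Type*} [Finite κ] {B : LinearMap.BilinForm ℝ V}
    {Δ : Module.Basis κ ℝ V} (h : IsSimpleSystem B Δ) {A : Set V} (hA : A ⊆ posPhi B Δ)
    (hinf : A.Infinite) : ∃ γ ∈ posPhi B Δ, {ρ ∈ A | 1 ≤ |B γ ρ|}.Infinite := by
  by_contra! hfin
  have hsimple : (⋃ i, {ρ ∈ A | 1 ≤ |B (Δ i) ρ|}).Finite :=
    Set.finite_iUnion fun i => hfin _ (basis_mem_posPhi i)
  refine hinf.sdiff hsimple (Set.Finite.of_finite_fibers (fun ρ i => B (Δ i) ρ) ?_ ?_)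
  · refine (Set.Finite.pi' fun _ : κ => h.finite_setOf_abs_bilin_lt_one).subset ?_
    rintro _ ⟨ρ, ⟨hρ, hlt⟩, rfl⟩ i
    refine ⟨not_le.1 fun hle => hlt ?_, Δ i, basis_mem_Phi i, ρ, (hA hρ).1, rfl⟩
    exact Set.mem_iUnion.2 ⟨i, hρ, hle⟩
  · rintro _ ⟨γ, ⟨hγ, -⟩, rfl⟩
    refine (hfin γ (hA hγ)).subset fun ρ ⟨⟨hρ, _⟩, heq⟩ => ⟨hρ, ?_⟩
    have hflip : B.flip ρ = B.flip γ := Δ.ext fun i => congrFun heq i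
    have hone : B γ ρ = 1 :=
      (LinearMap.congr_fun hflip γ).trans (h.bilin_root_self (hA hγ).1)
    rw [hone, abs_one]

variable {B : LinearMap.BilinForm ℝ V} {Δ : Module.Basis ι ℝ V}

lemma finite_setOf_smul_notMem (h : IsSimpleSystem B Δ) (γ : V) {s : Set V} (hs : s ∈ 𝓝 0) :
    {ρ ∈ posPhi B Δ | ∃ r : ℝ, |r| ≤ 1 ∧ (r / l1 Δ ρ) • γ ∉ s}.Finite := by
  have hev : ∀ᶠ e : ℝ in 𝓝 0, e • γ ∈ s := by
    have hcont : ContinuousAt (fun e : ℝ => e • γ) 0 := by fun_prop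
    exact hcont.eventually (by simpa using hs)
  obtain ⟨δ, hδ, hball⟩ := Metric.eventually_nhds_iff.1 hev
  refine (h.finite_setOf_l1_le δ⁻¹).subset fun ρ ⟨hρ, r, hr, hmem⟩ => ⟨hρ, ?_⟩
  by_contra! hlt
  refine hmem (hball ?_)
  have hpos := h.l1_pos hρ
  rw [dist_zero_right, Real.norm_eq_abs, abs_div, abs_of_pos hpos, div_lt_iff₀ hpos]
  exact hr.trans_lt ((inv_lt_iff_one_lt_mul₀' hδ).1 hlt)

theorem Eset_subset_closure_E2 (h : IsSimpleSystem B Δ) : Eset B Δ ⊆ closure (E2 B Δ) := by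
  intro x hx
  refine mem_closure_iff_nhds.2 fun s hs => ?_
  obtain ⟨P, hP, Q, hQ, hPQ⟩ := eventually_prod_iff.1
    (eventually_nrm_add_mem (h.l1_eq_one_of_mem_Eset hx) hs)
  have hinf : {ρ ∈ posPhi B Δ | P (nrm Δ ρ)}.Infinite := by
    refine Set.Infinite.of_image (nrm Δ) ((Set.Infinite.of_accPt (hx.nhds_inter hP)).mono ?_)
    rintro _ ⟨hy, ρ, hρ, rfl⟩
    exact ⟨ρ, ⟨hρ, hy⟩, rfl⟩
  obtain ⟨γ, hγ, hγinf⟩ := h.exists_infinite_one_le_abs_bilin (fun ρ hρ => hρ.1) hinf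
  obtain ⟨ρ, ⟨⟨hρ, hρP⟩, hβ⟩, hρQ⟩ :=
    (hγinf.sdiff (h.finite_setOf_smul_notMem γ hQ)).nonempty
  obtain ⟨r, hr, hquad⟩ := exists_abs_le_one_quadratic_eq_zero hβ
  have hQr : Q ((r / l1 Δ ρ) • γ) := by
    by_contra hQr
    exact hρQ ⟨hρ, r, hr, hQr⟩
  have hl := (h.l1_pos hρ).ne'
  have hscale : ρ + r • γ = l1 Δ ρ • (nrm Δ ρ + (r / l1 Δ ρ) • γ) := by
    rw [nrm, smul_add, smul_inv_smul₀ hl, smul_smul, mul_div_cancel₀ r hl]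
  obtain ⟨hne, hmem⟩ := hPQ hρP hQr
  refine ⟨nrm Δ (ρ + r • γ), by rwa [hscale, nrm_smul hl], h.nrm_add_smul_mem_E2 hρ hγ ?_ ?_⟩
  · rw [bilin_add_smul_self h.symm (h.bilin_root_self hρ.1) (h.bilin_root_self hγ.1), h.symm,
      hquad]
  · rw [hscale, l1_smul]
    exact mul_ne_zero hl hne

end Density

end IsSimpleSystem

theorem statement14_general (B : LinearMap.BilinForm ℝ V) (Δ : Module.Basis ι ℝ V)
    (h : IsSimpleSystem B Δ) : E2 B Δ ⊆ Eset B Δ ∧ Eset B Δ = closure (E2 B Δ) :=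
  ⟨h.E2_subset_Eset, h.Eset_subset_closure_E2.antisymm
    (closure_minimal h.E2_subset_Eset (isClosed_derivedSet (nPhi B Δ)))⟩

/-- If `Φ` is infinite, then `E₂ ⊆ E(Φ)` and `E₂` is dense in `E(Φ)`; equivalently,
since `E(Φ)` is closed, `E(Φ)` is the topological closure of `E₂`. -/
theorem statement14 (B : LinearMap.BilinForm ℝ V) (Δ : Module.Basis ι ℝ V)
    (hsymm : ∀ u v : V, B u v = B v u)
    (hdiag : ∀ i : ι, B (Δ i) (Δ i) = 1)
    (hoff : ∀ i j : ι, i ≠ j → B (Δ i) (Δ j) ≤ -1 ∨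
      ∃ k : ℕ, 2 ≤ k ∧ B (Δ i) (Δ j) = -Real.cos (Real.pi / (k : ℝ)))
    (hinf : (Phi B Δ).Infinite) :
    E2 B Δ ⊆ Eset B Δ ∧ Eset B Δ = closure (E2 B Δ) := by
  exact statement14_general B Δ ⟨hsymm, hdiag, hoff⟩
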